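/- arXiv:1607.08711 — 3 statements merged into one kernel-verified Lean document; each statement's English description precedes it below -/
import Mathlib

section
/- Let β ∈ (1/2,1), ε ∈ (0,β), δ > 0, K > 0, and let g : (0,δ] → ℂ be continuous satisfying: (i) |g(b)| ≤ K b^{−β} for all b ∈ (0,δ]; and (ii) |g(b+h) − g(b)| ≤ K (b^{−2β} h^{β} + b^{−β} h^{β−ε}) whenever 0 < h < b and b + h ≤ δ. Then there exists C > 0, depending only on β, ε, δ, K, such that for all a > π and all t ≥ 1 with t > (a+π)/δ, one has |∫_{a/t}^{δ} e^{ibt} g(b) db| ≤ C ( t^{−(1−β)} a^{−(2β−1)} + t^{−(β−ε)} ). -/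
open MeasureTheory Real

/-- Shifting an oscillatory integral by half a period `π / t` turns it into boundary terms and an
integral of increments of the amplitude. -/
lemma two_mul_integral_exp_mul_eq {g : ℝ → ℂ} {x y t : ℝ} (ht : 0 < t) (hxy : x + π / t ≤ y)
    (hg : ContinuousOn g (Set.Icc x y)) :
    2 * ∫ b in x..y, Complex.exp (Complex.I * (b : ℂ) * (t : ℂ)) * g b =
      (∫ b in x..x + π / t, Complex.exp (Complex.I * (b : ℂ) * (t : ℂ)) * g b) +
      (∫ b in (y - π / t)..y, Complex.exp (Complex.I * (b : ℂ) * (t : ℂ)) * g b) -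
      ∫ b in x..(y - π / t),
        Complex.exp (Complex.I * (b : ℂ) * (t : ℂ)) * (g (b + π / t) - g b) := by
  have hh : 0 < π / t := by positivity
  set h := π / t with hh_def
  set F : ℝ → ℂ := fun b => Complex.exp (Complex.I * (b : ℂ) * (t : ℂ)) * g b with hF
  have hFc : ContinuousOn F (Set.Icc x y) := by
    refine ContinuousOn.mul (Continuous.continuousOn ?_) hg
    fun_prop
  have hint : ∀ p q, x ≤ p → p ≤ q → q ≤ y → IntervalIntegrable F volume p q := by
    intro p q hp hpq hq
    refine ContinuousOn.intervalIntegrable (hFc.mono ?_)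
    rw [Set.uIcc_of_le hpq]
    exact Set.Icc_subset_Icc hp hq
  have hshift : ∀ b : ℝ, F (b + h) =
      -(Complex.exp (Complex.I * (b : ℂ) * (t : ℂ)) * g (b + h)) := by
    intro b
    have ht' : (t : ℂ) ≠ 0 := by exact_mod_cast ht.ne'
    have : Complex.I * ((b + h : ℝ) : ℂ) * (t : ℂ) =
        Complex.I * (b : ℂ) * (t : ℂ) + π * Complex.I := by
      rw [hh_def]; push_cast; field_simp
    simp only [hF]
    rw [this, Complex.exp_add, Complex.exp_pi_mul_I]
    ring
  have hFsint : IntervalIntegrable (fun b => -F (b + h)) volume x (y - h) := by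
    have := ((hint (x + h) y (by linarith) hxy le_rfl).comp_add_right h).neg
    rwa [add_sub_cancel_right] at this
  have hsub : ∫ b in x..(y - h), F (b + h) = ∫ b in (x + h)..y, F b := by
    rw [intervalIntegral.integral_comp_add_right]; simp
  have hdiff : ∫ b in x..(y - h),
      Complex.exp (Complex.I * (b : ℂ) * (t : ℂ)) * (g (b + h) - g b) =
      -(∫ b in (x + h)..y, F b) - ∫ b in x..(y - h), F b := by
    rw [← hsub, ← intervalIntegral.integral_neg, ← intervalIntegral.integral_sub hFsint
      (hint x (y - h) le_rfl (by linarith) (by linarith))]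
    refine intervalIntegral.integral_congr fun b _ => ?_
    simp only [hshift]
    simp only [hF]
    ring
  have h₁ := intervalIntegral.integral_add_adjacent_intervals
    (hint x (x + h) le_rfl (by linarith) hxy) (hint (x + h) y (by linarith) hxy le_rfl)
  have h₂ := intervalIntegral.integral_add_adjacent_intervals
    (hint x (y - h) le_rfl (by linarith) (by linarith))
    (hint (y - h) y (by linarith) (by linarith) le_rfl)
  rw [hdiff]
  linear_combination -h₁ - h₂

lemma norm_exp_I_mul_mul_mul (b t : ℝ) (z : ℂ) :
    ‖Complex.exp (Complex.I * (b : ℂ) * (t : ℂ)) * z‖ = ‖z‖ := by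
  rw [norm_mul, show Complex.I * (b : ℂ) * (t : ℂ) = ((b * t : ℝ) : ℂ) * Complex.I by
    push_cast; ring, Complex.norm_exp_ofReal_mul_I, one_mul]

lemma integral_rpow_neg_le_of_one_lt {s x y : ℝ} (hs : 1 < s) (hx : 0 < x) (hxy : x ≤ y) :
    ∫ b in x..y, b ^ (-s) ≤ x ^ (1 - s) / (s - 1) := by
  have h0 : (0 : ℝ) ∉ Set.uIcc x y := by
    rw [Set.uIcc_of_le hxy]; exact fun h => hx.not_ge h.1
  rw [integral_rpow (Or.inr ⟨by linarith, h0⟩), ← neg_div_neg_eq, show -(-s + 1) = s - 1 by ring,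
    show -s + 1 = 1 - s by ring]
  have : 0 ≤ y ^ (1 - s) := rpow_nonneg (hx.le.trans hxy) _
  have : 0 < s - 1 := by linarith
  gcongr
  linarith

lemma integral_rpow_neg_le_of_lt_one {s x y : ℝ} (hs : s < 1) (hx : 0 ≤ x) :
    ∫ b in x..y, b ^ (-s) ≤ y ^ (1 - s) / (1 - s) := by
  rw [integral_rpow (Or.inl (by linarith)), show -s + 1 = 1 - s by ring]
  have : 0 ≤ x ^ (1 - s) := rpow_nonneg hx _
  have : 0 < 1 - s := by linarith
  gcongr
  linarith

lemma norm_integral_exp_mul_le_of_rpow_bound {g : ℝ → ℂ} {β δ K x p q t : ℝ} (hβ : 0 ≤ β)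
    (hK : 0 ≤ K) (hx : 0 < x) (hxp : x ≤ p) (hpq : p ≤ q) (hq : q ≤ δ)
    (hg : ∀ b ∈ Set.Ioc (0 : ℝ) δ, ‖g b‖ ≤ K * b ^ (-β)) :
    ‖∫ b in p..q, Complex.exp (Complex.I * (b : ℂ) * (t : ℂ)) * g b‖ ≤
      K * x ^ (-β) * (q - p) := by
  rw [← abs_of_nonneg (sub_nonneg.2 hpq)]
  refine intervalIntegral.norm_integral_le_of_norm_le_const fun b hb => ?_
  rw [Set.uIoc_of_le hpq] at hb
  have hxb : x ≤ b := hxp.trans hb.1.le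
  rw [norm_exp_I_mul_mul_mul]
  refine (hg b ⟨hx.trans_le hxb, hb.2.trans hq⟩).trans ?_
  exact mul_le_mul_of_nonneg_left (rpow_le_rpow_of_nonpos hx hxb (by linarith)) hK

lemma norm_integral_exp_mul_sub_le {g : ℝ → ℂ} {β ε δ K x h t : ℝ}
    (hβ : β ∈ Set.Ioo (1/2 : ℝ) 1) (hK : 0 ≤ K) (hh : 0 < h) (hhx : h < x) (hxδ : x + h ≤ δ)
    (hg : ∀ b h : ℝ, 0 < h → h < b → b + h ≤ δ →
      ‖g (b + h) - g b‖ ≤ K * (b ^ (-(2*β)) * h ^ β + b ^ (-β) * h ^ (β - ε))) :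
    ‖∫ b in x..(δ - h), Complex.exp (Complex.I * (b : ℂ) * (t : ℂ)) * (g (b + h) - g b)‖ ≤
      K * (x ^ (1 - 2*β) / (2*β - 1) * h ^ β + δ ^ (1 - β) / (1 - β) * h ^ (β - ε)) := by
  obtain ⟨hβ₁, hβ₂⟩ := hβ
  have hx : 0 < x := hh.trans hhx
  have hle : x ≤ δ - h := by linarith
  have h0 : (0 : ℝ) ∉ Set.uIcc x (δ - h) := by
    rw [Set.uIcc_of_le hle]; exact fun h => hx.not_ge h.1
  have hi : ∀ r : ℝ, IntervalIntegrable (fun b : ℝ => b ^ r) volume x (δ - h) := fun r =>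
    intervalIntegral.intervalIntegrable_rpow (Or.inr h0)
  have hi₁ := (hi (-(2*β))).mul_const (h ^ β)
  have hi₂ := (hi (-β)).mul_const (h ^ (β - ε))
  refine (intervalIntegral.norm_integral_le_of_norm_le hle (Filter.Eventually.of_forall
    fun b hb => ?_) ((hi₁.add hi₂).const_mul K)).trans ?_
  · rw [norm_exp_I_mul_mul_mul]
    exact hg b h hh (hhx.trans hb.1) (by linarith [hb.2])
  · rw [intervalIntegral.integral_const_mul, intervalIntegral.integral_add hi₁ hi₂,
      intervalIntegral.integral_mul_const, intervalIntegral.integral_mul_const]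
    have hb₁ := integral_rpow_neg_le_of_one_lt (s := 2*β) (by linarith) hx hle
    have hb₂ : ∫ b in x..(δ - h), b ^ (-β) ≤ δ ^ (1 - β) / (1 - β) := by
      refine (integral_rpow_neg_le_of_lt_one hβ₂ hx.le).trans ?_
      have : 0 < 1 - β := by linarith
      have : 0 ≤ δ - h := by linarith
      gcongr
      linarith
    gcongr

theorem stmt2 (β ε δ K : ℝ) (hβ : β ∈ Set.Ioo (1/2 : ℝ) 1) (hε : ε ∈ Set.Ioo 0 β)
    (hδ : 0 < δ) (hK : 0 < K) :
    ∃ C : ℝ, 0 < C ∧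
      ∀ g : ℝ → ℂ, ContinuousOn g (Set.Ioc 0 δ) →
      (∀ b ∈ Set.Ioc (0:ℝ) δ, ‖g b‖ ≤ K * b ^ (-β)) →
      (∀ b h : ℝ, 0 < h → h < b → b + h ≤ δ →
        ‖g (b + h) - g b‖ ≤ K * (b ^ (-(2*β)) * h ^ β + b ^ (-β) * h ^ (β - ε))) →
      ∀ a t : ℝ, π < a → 1 ≤ t → (a + π) / δ < t →
        ‖∫ b in (a/t)..δ, Complex.exp (Complex.I * (b:ℂ) * (t:ℂ)) * g b‖ ≤
          C * (t ^ (-(1 - β)) * a ^ (-(2*β - 1)) + t ^ (-(β - ε))) := by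
  have ⟨hβ₁, hβ₂⟩ := hβ
  have hβ₃ : 0 < 2*β - 1 := by linarith
  have hβ₄ : 0 < 1 - β := by linarith
  set A := 2 * K * π + K * π ^ β / (2*β - 1) with hA
  set B := K * (δ ^ (1 - β) / (1 - β)) * π ^ (β - ε) with hB
  have hA0 : 0 < A := by positivity
  have hB0 : 0 < B := by positivity
  refine ⟨A + B, by positivity, fun g hgc hg₁ hg₂ a t ha ht hat => ?_⟩
  have ht0 : 0 < t := by linarith
  have ha0 : 0 < a := pi_pos.trans ha
  have ha1 : 1 ≤ a := by linarith [pi_gt_three]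
  have hx : 0 < a / t := by positivity
  have hh : 0 < π / t := by positivity
  have hhx : π / t < a / t := by gcongr
  have hxδ : a / t + π / t ≤ δ := by
    rw [← add_div, div_le_iff₀ ht0]
    rw [div_lt_iff₀ hδ] at hat
    linarith
  have key := two_mul_integral_exp_mul_eq ht0 hxδ
    (hgc.mono fun b hb => ⟨hx.trans_le hb.1, hb.2⟩)
  have b₁ := norm_integral_exp_mul_le_of_rpow_bound (t := t) (by linarith) hK.le hx le_rfl
    (by linarith : a / t ≤ a / t + π / t) hxδ hg₁
  have b₂ := norm_integral_exp_mul_le_of_rpow_bound (t := t) (by linarith) hK.le hx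
    (by linarith : a / t ≤ δ - π / t) (by linarith) le_rfl hg₁
  have b₃ := norm_integral_exp_mul_sub_le (t := t) hβ hK.le hh hhx hxδ hg₂
  have hboundary : (a / t) ^ (-β) * (π / t) ≤ π * (t ^ (-(1 - β)) * a ^ (-(2*β - 1))) := by
    have e : (a / t) ^ (-β) * (π / t) = π * (t ^ (-(1 - β)) * a ^ (-β)) := by
      rw [div_rpow ha0.le ht0.le, show -(1 - β) = β - 1 by ring, rpow_sub_one ht0.ne',
        rpow_neg ht0.le]
      field_simp
    rw [e]
    gcongr
    linarith
  have hincr : (a / t) ^ (1 - 2*β) * (π / t) ^ β =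
      π ^ β * (t ^ (-(1 - β)) * a ^ (-(2*β - 1))) := by
    rw [div_rpow ha0.le ht0.le, div_rpow pi_pos.le ht0.le, neg_sub (2*β),
      show -(1 - β) = -(1 - 2*β) - β by ring, rpow_sub ht0 (-(1 - 2*β)), rpow_neg ht0.le]
    field_simp
  have hincr' : (π / t) ^ (β - ε) = π ^ (β - ε) * t ^ (-(β - ε)) := by
    rw [div_rpow pi_pos.le ht0.le, rpow_neg ht0.le, div_eq_mul_inv]
  set P := t ^ (-(1 - β)) * a ^ (-(2*β - 1)) with hP
  set Q := t ^ (-(β - ε)) with hQ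
  have hP0 : 0 < P := by positivity
  have hQ0 : 0 < Q := by positivity
  set J := ∫ b in (a/t)..δ, Complex.exp (Complex.I * (b:ℂ) * (t:ℂ)) * g b with hJ
  have h2 : 2 * ‖J‖ ≤ A * P + B * Q := by
    have hn : 2 * ‖J‖ = ‖2 * J‖ := by rw [norm_mul]; simp
    rw [hn, key]
    refine (norm_sub_le_of_le (norm_add_le_of_le b₁ b₂) b₃).trans ?_
    have e : K * ((a / t) ^ (1 - 2*β) / (2*β - 1) * (π / t) ^ β +
        δ ^ (1 - β) / (1 - β) * (π / t) ^ (β - ε)) =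
        K * π ^ β / (2*β - 1) * P + B * Q := by
      rw [div_mul_eq_mul_div, hincr, hincr', hB]
      ring
    rw [e, hA]
    have := mul_le_mul_of_nonneg_left hboundary hK.le
    linarith
  have : 0 ≤ ‖J‖ := norm_nonneg J
  have := mul_pos hA0 hQ0
  have := mul_pos hB0 hP0
  linarith
end

section
/- Let (Y,μ) be a probability space, β ∈ (1/2,1), q ∈ (1, 2β], c > 0, C₀ > 0, and let τ : Y → ℝ be measurable with τ(y) ≥ 1 for a.e. y. Suppose μ(τ > t) = c t^{−β} + H(t) for all t > 0, where |H(t)| ≤ C₀ t^{−q} for all t ≥ 1. Set c_β = Γ(1−β) e^{iβπ/2} and e₁ = i ∫_0^∞ H(t) dt (this integral converges absolutely). Then there exists C > 0 such that |1 − ∫_Y e^{−ibτ} dμ − c c_β b^{β} − e₁ b| ≤ C b^{q} for all b ∈ (0,1]. -/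
open MeasureTheory Real
open scoped ENNReal
open Set Filter Topology

theorem integrableOn_rpow_mul_exp_neg_mul {a ε : ℝ} (ha : -1 < a) (hε : 0 < ε) :
    IntegrableOn (fun t : ℝ => t ^ a * Real.exp (-ε * t)) (Ioi 0) := by
  simpa using integrableOn_rpow_mul_exp_neg_mul_rpow ha one_pos hε

theorem norm_rpow_mul_cexp (a : ℝ) (s : ℂ) {t : ℝ} (ht : 0 < t) :
    ‖((t ^ a : ℝ) : ℂ) * Complex.exp (-s * t)‖ = t ^ a * Real.exp (-s.re * t) := by
  rw [norm_mul, Complex.norm_exp, Complex.norm_real, norm_of_nonneg (by positivity)]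
  simp

theorem measurable_rpow_mul_cexp (a : ℝ) (s : ℂ) :
    Measurable fun t : ℝ => ((t ^ a : ℝ) : ℂ) * Complex.exp (-s * t) := by
  fun_prop

theorem integrableOn_rpow_mul_cexp {a : ℝ} (ha : -1 < a) {s : ℂ} (hs : 0 < s.re) :
    IntegrableOn (fun t : ℝ => ((t ^ a : ℝ) : ℂ) * Complex.exp (-s * t)) (Ioi 0) := by
  refine (integrableOn_rpow_mul_exp_neg_mul ha hs).mono'
    (measurable_rpow_mul_cexp a s).aestronglyMeasurable ?_
  filter_upwards [ae_restrict_mem measurableSet_Ioi] with t ht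
  exact (norm_rpow_mul_cexp a s ht).le

theorem differentiableOn_laplace_rpow {a : ℝ} (ha : -1 < a) :
    DifferentiableOn ℂ
      (fun s : ℂ => ∫ t in Ioi (0 : ℝ), ((t ^ a : ℝ) : ℂ) * Complex.exp (-s * t))
      {s : ℂ | 0 < s.re} := by
  intro s hs
  have hs' : 0 < s.re := hs
  have hU : {z : ℂ | s.re / 2 < z.re} ∈ 𝓝 s :=
    (isOpen_lt continuous_const Complex.continuous_re).mem_nhds (by simp [hs'])
  refine DifferentiableAt.differentiableWithinAt (HasDerivAt.differentiableAt
    (hasDerivAt_integral_of_dominated_loc_of_deriv_le hU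
    (F' := fun z t => -(((t ^ (a + 1) : ℝ) : ℂ) * Complex.exp (-z * t)))
    (bound := fun t => t ^ (a + 1) * Real.exp (-(s.re / 2) * t))
    (.of_forall fun z => (measurable_rpow_mul_cexp a z).aestronglyMeasurable)
    (integrableOn_rpow_mul_cexp ha hs')
    (measurable_rpow_mul_cexp (a + 1) s).neg.aestronglyMeasurable ?_
    (integrableOn_rpow_mul_exp_neg_mul (by linarith) (by positivity)) ?_).2)
  · filter_upwards [ae_restrict_mem measurableSet_Ioi] with t ht z hz
    have ht : 0 < t := ht
    have hz : s.re / 2 < z.re := hz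
    rw [norm_neg, norm_rpow_mul_cexp _ _ ht]
    gcongr
  · filter_upwards [ae_restrict_mem measurableSet_Ioi] with t ht z _
    have ht : 0 < t := ht
    have h := (((hasDerivAt_id z).neg.mul_const (t : ℂ)).cexp).const_mul ((t ^ a : ℝ) : ℂ)
    refine h.congr_deriv ?_
    rw [Real.rpow_add ht, Real.rpow_one]
    simp
    ring

/-- The Laplace transform of a power function on the right half plane. -/
theorem laplace_rpow {a : ℝ} (ha : -1 < a) {s : ℂ} (hs : 0 < s.re) :
    ∫ t in Ioi (0 : ℝ), ((t ^ a : ℝ) : ℂ) * Complex.exp (-s * t)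
      = (Real.Gamma (a + 1) : ℂ) * s ^ (-((a + 1 : ℝ) : ℂ)) := by
  have hopen : IsOpen {s : ℂ | 0 < s.re} := isOpen_lt continuous_const Complex.continuous_re
  have hright : DifferentiableOn ℂ
      (fun s : ℂ => (Real.Gamma (a + 1) : ℂ) * s ^ (-((a + 1 : ℝ) : ℂ))) {s : ℂ | 0 < s.re} :=
    fun z hz => ((differentiableAt_id.cpow (differentiableAt_const _)
      (Or.inl hz)).const_mul _).differentiableWithinAt
  refine ((differentiableOn_laplace_rpow ha).analyticOnNhd
    hopen).eqOn_of_preconnected_of_frequently_eq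
    (hright.analyticOnNhd hopen) (convex_halfSpace_re_gt 0).isPreconnected
    (z₀ := 1) (by simp) ?_ hs
  have hlim : Tendsto (fun x : ℝ => (x : ℂ)) (𝓝[>] 1) (𝓝[≠] 1) := by
    refine tendsto_nhdsWithin_iff.2 ⟨?_, ?_⟩
    · exact (Complex.continuous_ofReal.tendsto' 1 1 (by simp)).mono_left nhdsWithin_le_nhds
    · filter_upwards [self_mem_nhdsWithin] with x hx
      have : (1 : ℝ) < x := hx
      simpa using this.ne'
  refine hlim.frequently (Eventually.frequently ?_)
  filter_upwards [self_mem_nhdsWithin] with x hx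
  have hx : (0 : ℝ) < x := one_pos.trans hx
  have h := Real.integral_rpow_mul_exp_neg_mul_Ioi (a := a + 1) (by linarith) hx
  rw [show (-((a + 1 : ℝ) : ℂ)) = ((-(a + 1) : ℝ) : ℂ) by push_cast; ring,
    ← Complex.ofReal_cpow hx.le, ← Complex.ofReal_mul, Real.rpow_neg hx.le,
    ← Real.inv_rpow hx.le, mul_comm, ← one_div, ← h, ← integral_complex_ofReal]
  refine setIntegral_congr_fun measurableSet_Ioi fun t _ => ?_
  push_cast
  simp

theorem one_sub_integral_cexp {Y : Type*} [MeasurableSpace Y] (μ : Measure Y)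
    [IsProbabilityMeasure μ] {τ : Y → ℝ} (hτ : Measurable τ) (hτ0 : ∀ᵐ y ∂μ, 0 ≤ τ y)
    {s : ℂ} (hs : 0 < s.re) :
    1 - ∫ y, Complex.exp (-s * τ y) ∂μ
      = s * ∫ t in Ioi (0 : ℝ), (μ.real {y | t < τ y} : ℂ) * Complex.exp (-s * t) := by
  have hs0 : s ≠ 0 := by rintro rfl; simp at hs
  let f : Y → ℝ → ℂ := fun y t => (Iio (τ y)).indicator (fun t : ℝ => s * Complex.exp (-s * t)) t
  have hf : Integrable (Function.uncurry f) (μ.prod (volume.restrict (Ioi 0))) := by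
    have hset : MeasurableSet {p : Y × ℝ | p.2 < τ p.1} :=
      measurableSet_lt measurable_snd (hτ.comp measurable_fst)
    have hg : Integrable (fun p : Y × ℝ => s * Complex.exp (-s * p.2))
        (μ.prod (volume.restrict (Ioi 0))) :=
      ((integrableOn_exp_mul_complex_Ioi (a := -s) (by simpa using hs) 0).integrable.const_mul
        s).comp_snd μ
    refine (hg.indicator hset).congr (.of_forall fun p => ?_)
    simp [f, Function.uncurry, indicator]
  have hexp : Integrable (fun y => Complex.exp (-s * τ y)) μ := by
    refine (integrable_const (1 : ℝ)).mono' (by fun_prop) ?_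
    filter_upwards [hτ0] with y hy
    rw [Complex.norm_exp]
    simpa using mul_nonneg hs.le hy
  calc 1 - ∫ y, Complex.exp (-s * τ y) ∂μ
      = ∫ y, (1 - Complex.exp (-s * τ y)) ∂μ := by
        rw [integral_sub (integrable_const _) hexp]; simp
    _ = ∫ y, (∫ t in Ioi (0 : ℝ), f y t) ∂μ := by
        refine integral_congr_ae ?_
        filter_upwards [hτ0] with y hy
        rw [setIntegral_indicator measurableSet_Iio, Ioi_inter_Iio, ← integral_Ioc_eq_integral_Ioo,
          ← intervalIntegral.integral_of_le hy, intervalIntegral.integral_const_mul,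
          integral_exp_mul_complex (neg_ne_zero.2 hs0)]
        field_simp
        simp
    _ = ∫ t in Ioi (0 : ℝ), ∫ y, f y t ∂μ := integral_integral_swap hf
    _ = _ := by
        rw [← integral_const_mul]
        refine setIntegral_congr_fun measurableSet_Ioi fun t _ => ?_
        have hset : MeasurableSet {y | t < τ y} := measurableSet_lt measurable_const hτ
        have : (fun y => f y t) = {y | t < τ y}.indicator fun _ => s * Complex.exp (-s * t) := by
          ext y; simp [f, indicator]
        simp only [this]
        rw [integral_indicator_const _ hset, Complex.real_smul]
        ring

theorem norm_integral_cexp_sub_one_mul_le {H : ℝ → ℝ} {q C₀ : ℝ} (hq1 : 1 < q) (hq2 : q < 2)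
    (hC₀ : 0 ≤ C₀) (hint : IntegrableOn H (Ioi 0)) (hH : ∀ t : ℝ, 1 ≤ t → |H t| ≤ C₀ * t ^ (-q))
    {b : ℝ} (hb : b ∈ Ioc (0 : ℝ) 1) :
    ‖∫ t in Ioi (0 : ℝ), (Complex.exp (-(Complex.I * b) * t) - 1) * H t‖
      ≤ ((∫ t in Ioc (0 : ℝ) 1, |H t|) + C₀ * (1 / (2 - q) + 2 / (q - 1))) * b ^ (q - 1) := by
  obtain ⟨hb0, hb1⟩ := hb
  have hbinv : 0 < b⁻¹ := inv_pos.2 hb0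
  let g₁ : ℝ → ℝ := (Ioc 0 1).indicator fun t => b * |H t|
  let g₂ : ℝ → ℝ := (Ioc 0 b⁻¹).indicator fun t => C₀ * b * t ^ (1 - q)
  let g₃ : ℝ → ℝ := (Ioi b⁻¹).indicator fun t => C₀ * 2 * t ^ (-q)
  have hi₁ : Integrable g₁ := (integrable_indicator_iff measurableSet_Ioc).2
    (((hint.mono_set Ioc_subset_Ioi_self).abs).const_mul b)
  have hi₂ : Integrable g₂ := (integrable_indicator_iff measurableSet_Ioc).2
    (((intervalIntegral.intervalIntegrable_rpow' (by linarith)).1).const_mul _)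
  have hi₃ : Integrable g₃ := (integrable_indicator_iff measurableSet_Ioi).2
    ((integrableOn_Ioi_rpow_of_lt (by linarith) hbinv).const_mul _)
  have hn₁ : 0 ≤ g₁ := indicator_nonneg fun t _ => by positivity
  have hn₂ : 0 ≤ g₂ := indicator_nonneg fun t ht => by
    have := rpow_nonneg ht.1.le (1 - q)
    positivity
  have hn₃ : 0 ≤ g₃ := indicator_nonneg fun t ht => by
    have := rpow_nonneg (hbinv.trans ht).le (-q)
    positivity
  have he₁ : ∫ t, g₁ t = b * ∫ t in Ioc (0 : ℝ) 1, |H t| := by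
    rw [integral_indicator measurableSet_Ioc, integral_const_mul]
  have he₂ : ∫ t, g₂ t = C₀ * (1 / (2 - q)) * b ^ (q - 1) := by
    rw [integral_indicator measurableSet_Ioc, integral_const_mul,
      ← intervalIntegral.integral_of_le hbinv.le, integral_rpow (Or.inl (by linarith)),
      zero_rpow (by linarith), show 1 - q + 1 = 1 - (q - 1) by ring, rpow_sub hbinv, rpow_one,
      inv_rpow hb0.le, show 1 - (q - 1) = 2 - q by ring]
    have : b ^ (q - 1) ≠ 0 := (rpow_pos_of_pos hb0 _).ne'
    field_simp
    ring
  have he₃ : ∫ t, g₃ t = C₀ * (2 / (q - 1)) * b ^ (q - 1) := by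
    rw [integral_indicator measurableSet_Ioi, integral_const_mul,
      integral_Ioi_rpow_of_lt (by linarith) hbinv, show -q + 1 = -(q - 1) by ring,
      rpow_neg hbinv.le, inv_rpow hb0.le, inv_inv, neg_div_neg_eq]
    ring
  have hbq : b ≤ b ^ (q - 1) := by
    simpa using rpow_le_rpow_of_exponent_ge hb0 hb1 (show q - 1 ≤ 1 by linarith)
  have hmain : ‖∫ t in Ioi (0 : ℝ), (Complex.exp (-(Complex.I * b) * t) - 1) * H t‖
      ≤ ∫ t in Ioi (0 : ℝ), (g₁ t + g₂ t + g₃ t) := by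
    refine norm_integral_le_of_norm_le ((hi₁.add hi₂).add hi₃).integrableOn ?_
    filter_upwards [ae_restrict_mem measurableSet_Ioi] with t ht
    have ht : 0 < t := ht
    have hsmall : ‖Complex.exp (-(Complex.I * b) * t) - 1‖ ≤ b * t := by
      have := Real.norm_exp_I_mul_ofReal_sub_one_le (x := -(b * t))
      rw [norm_neg, norm_of_nonneg (by positivity)] at this
      convert this using 4
      push_cast
      ring
    have hlarge : ‖Complex.exp (-(Complex.I * b) * t) - 1‖ ≤ 2 := by
      refine (norm_sub_le _ _).trans ?_
      rw [Complex.norm_exp]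
      norm_num
    rw [norm_mul, Complex.norm_real, norm_eq_abs]
    have h₁ := hn₁ t
    have h₂ := hn₂ t
    have h₃ := hn₃ t
    simp only [Pi.zero_apply] at h₁ h₂ h₃
    rcases le_or_gt t 1 with h | h
    · have : g₁ t = b * |H t| := indicator_of_mem (show t ∈ Ioc (0 : ℝ) 1 from ⟨ht, h⟩) _
      have : ‖Complex.exp (-(Complex.I * b) * t) - 1‖ * |H t| ≤ b * |H t| := by
        gcongr
        nlinarith
      linarith
    · have hHt := hH t h.le
      rcases le_or_gt t b⁻¹ with h' | h'
      · have hg : g₂ t = C₀ * b * t ^ (1 - q) :=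
          indicator_of_mem (show t ∈ Ioc (0 : ℝ) b⁻¹ from ⟨ht, h'⟩) _
        rw [sub_eq_add_neg, rpow_add ht, rpow_one] at hg
        have : ‖Complex.exp (-(Complex.I * b) * t) - 1‖ * |H t| ≤ b * t * (C₀ * t ^ (-q)) := by
          gcongr
        linarith
      · have : g₃ t = C₀ * 2 * t ^ (-q) := indicator_of_mem (show t ∈ Ioi b⁻¹ from h') _
        have : ‖Complex.exp (-(Complex.I * b) * t) - 1‖ * |H t| ≤ 2 * (C₀ * t ^ (-q)) := by
          gcongr
        linarith
  have hle : ∫ t in Ioi (0 : ℝ), (g₁ t + g₂ t + g₃ t) ≤ ∫ t, (g₁ t + g₂ t + g₃ t) :=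
    setIntegral_le_integral ((hi₁.add hi₂).add hi₃)
      (.of_forall fun t => add_nonneg (add_nonneg (hn₁ t) (hn₂ t)) (hn₃ t))
  have hi₁₂ : Integrable fun t => g₁ t + g₂ t := hi₁.add hi₂
  rw [integral_add hi₁₂ hi₃, integral_add hi₁ hi₂, he₁, he₂, he₃] at hle
  have hpos : 0 ≤ ∫ t in Ioc (0 : ℝ) 1, |H t| := integral_nonneg fun t => abs_nonneg _
  nlinarith [mul_le_mul_of_nonneg_right hbq hpos]

theorem integrableOn_of_tail {T H : ℝ → ℝ} {β q c C₀ : ℝ} (hβ : β < 1) (hq : 1 < q)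
    (hT : Antitone T) (htail : ∀ t : ℝ, 0 < t → T t = c * t ^ (-β) + H t)
    (hH : ∀ t : ℝ, 1 ≤ t → |H t| ≤ C₀ * t ^ (-q)) :
    IntegrableOn H (Ioi 0) := by
  have hpow : IntegrableOn (fun t : ℝ => c * t ^ (-β)) (Ioc 0 1) :=
    ((intervalIntegral.intervalIntegrable_rpow' (by linarith)).1).const_mul _
  have heq : EqOn H (fun t => T t - c * t ^ (-β)) (Ioi 0) := fun t ht => by
    simp [htail t ht]
  rw [← Ioc_union_Ioi_eq_Ioi zero_le_one]
  refine IntegrableOn.union ?_ ?_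
  · refine IntegrableOn.congr_fun (IntegrableOn.sub ?_ hpow)
      (fun t ht => (heq ht.1).symm) measurableSet_Ioc
    exact ((hT.antitoneOn _).integrableOn_isCompact isCompact_Icc).mono_set Ioc_subset_Icc_self
  · refine ((integrableOn_Ioi_rpow_of_lt (a := -q) (by linarith) one_pos).const_mul C₀).mono' ?_ ?_
    · refine AEStronglyMeasurable.congr (f := fun t => T t - c * t ^ (-β)) ?_ ?_
      · have := hT.measurable
        exact Measurable.aestronglyMeasurable (by fun_prop)
      · filter_upwards [ae_restrict_mem measurableSet_Ioi] with t ht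
        exact (heq (Ioi_subset_Ioi zero_le_one ht)).symm
    · filter_upwards [ae_restrict_mem measurableSet_Ioi] with t ht
      exact hH t (le_of_lt ht)

theorem norm_cexp_neg_mul_le_one {s : ℂ} (hs : 0 ≤ s.re) {t : ℝ} (ht : 0 ≤ t) :
    ‖Complex.exp (-s * t)‖ ≤ 1 := by
  rw [Complex.norm_exp]
  simpa using mul_nonneg hs ht

section Tail

variable {Y : Type*} [MeasurableSpace Y] (μ : Measure Y) [IsProbabilityMeasure μ]
  {β c : ℝ} {τ : Y → ℝ} {H : ℝ → ℝ}

/-- Expansion of the Laplace transform in the open right half plane. -/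
theorem one_sub_integral_cexp_of_tail (hβ : β < 1) (hτ : Measurable τ)
    (hτ0 : ∀ᵐ y ∂μ, 0 ≤ τ y)
    (htail : ∀ t : ℝ, 0 < t → μ.real {y | t < τ y} = c * t ^ (-β) + H t)
    (hint : IntegrableOn H (Ioi 0)) {s : ℂ} (hs : 0 < s.re) :
    1 - ∫ y, Complex.exp (-s * τ y) ∂μ
      = c * (Real.Gamma (1 - β) : ℂ) * s ^ (β : ℂ)
        + s * ∫ t in Ioi (0 : ℝ), Complex.exp (-s * t) * H t := by
  have hs0 : s ≠ 0 := by rintro rfl; simp at hs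
  have hintH : IntegrableOn (fun t : ℝ => Complex.exp (-s * t) * H t) (Ioi 0) := by
    refine hint.ofReal.bdd_mul (c := 1) (Continuous.aestronglyMeasurable (by fun_prop)) ?_
    filter_upwards [ae_restrict_mem measurableSet_Ioi] with t ht
    exact norm_cexp_neg_mul_le_one hs.le (le_of_lt ht)
  have hsplit : ∫ t in Ioi (0 : ℝ), (μ.real {y | t < τ y} : ℂ) * Complex.exp (-s * t)
      = c * (∫ t in Ioi (0 : ℝ), ((t ^ (-β) : ℝ) : ℂ) * Complex.exp (-s * t))
        + ∫ t in Ioi (0 : ℝ), Complex.exp (-s * t) * H t := by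
    rw [← integral_const_mul, ← integral_add
      ((integrableOn_rpow_mul_cexp (by linarith) hs).const_mul _) hintH]
    refine setIntegral_congr_fun measurableSet_Ioi fun t ht => ?_
    simp only [htail t ht]
    push_cast
    ring
  rw [one_sub_integral_cexp μ hτ hτ0 hs, hsplit, laplace_rpow (by linarith) hs, mul_add,
    show -β + 1 = 1 - β by ring]
  have hpow : s * s ^ (-((1 - β : ℝ) : ℂ)) = s ^ (β : ℂ) := by
    nth_rw 1 [← Complex.cpow_one s]
    rw [← Complex.cpow_add _ _ hs0]
    congr 1
    push_cast
    ring
  rw [← hpow]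
  ring

/-- Expansion of the characteristic function, obtained as a boundary value of the Laplace
transform. -/
theorem one_sub_integral_cexp_I_of_tail (hβ : β < 1) (hτ : Measurable τ)
    (hτ0 : ∀ᵐ y ∂μ, 0 ≤ τ y)
    (htail : ∀ t : ℝ, 0 < t → μ.real {y | t < τ y} = c * t ^ (-β) + H t)
    (hint : IntegrableOn H (Ioi 0)) {b : ℝ} (hb : 0 < b) :
    1 - ∫ y, Complex.exp (-(Complex.I * b) * τ y) ∂μ
      = c * (Real.Gamma (1 - β) : ℂ) * (Complex.I * b) ^ (β : ℂ)
        + Complex.I * b * ∫ t in Ioi (0 : ℝ), Complex.exp (-(Complex.I * b) * t) * H t := by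
  let s : ℝ → ℂ := fun ε => ε + Complex.I * b
  have hre (ε : ℝ) : (s ε).re = ε := by simp [s]
  have hs : Tendsto s (𝓝[>] 0) (𝓝 (Complex.I * b)) :=
    (Continuous.tendsto' (by fun_prop) 0 _ (by simp [s])).mono_left nhdsWithin_le_nhds
  have hexp (t : ℝ) :
      Tendsto (fun ε => Complex.exp (-s ε * t)) (𝓝[>] 0) (𝓝 (Complex.exp (-(Complex.I * b) * t))) :=
    (hs.neg.mul_const _).cexp
  have hleft : Tendsto (fun ε => 1 - ∫ y, Complex.exp (-s ε * τ y) ∂μ) (𝓝[>] 0)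
      (𝓝 (1 - ∫ y, Complex.exp (-(Complex.I * b) * τ y) ∂μ)) := by
    refine tendsto_const_nhds.sub (tendsto_integral_filter_of_dominated_convergence
      (fun _ => 1) (.of_forall fun ε => ?_) ?_ (integrable_const _)
      (.of_forall fun y => hexp (τ y)))
    · exact Measurable.aestronglyMeasurable (by fun_prop)
    · filter_upwards [self_mem_nhdsWithin] with ε hε
      filter_upwards [hτ0] with y hy
      exact norm_cexp_neg_mul_le_one (by rw [hre]; exact le_of_lt hε) hy
  have hrest : Tendsto (fun ε => ∫ t in Ioi (0 : ℝ), Complex.exp (-s ε * t) * H t) (𝓝[>] 0)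
      (𝓝 (∫ t in Ioi (0 : ℝ), Complex.exp (-(Complex.I * b) * t) * H t)) := by
    refine tendsto_integral_filter_of_dominated_convergence
      (fun t => ‖H t‖) (.of_forall fun ε => ?_) ?_ hint.norm
      (.of_forall fun t => (hexp t).mul_const _)
    · exact (Continuous.aestronglyMeasurable (by fun_prop)).mul hint.ofReal.aestronglyMeasurable
    · filter_upwards [self_mem_nhdsWithin] with ε hε
      filter_upwards [ae_restrict_mem measurableSet_Ioi] with t ht
      rw [norm_mul, Complex.norm_real]
      exact mul_le_of_le_one_left (norm_nonneg _)
        (norm_cexp_neg_mul_le_one (by rw [hre]; exact le_of_lt hε) (le_of_lt ht))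
  have hpow : Tendsto (fun ε => s ε ^ (β : ℂ)) (𝓝[>] 0) (𝓝 ((Complex.I * b) ^ (β : ℂ))) :=
    hs.cpow tendsto_const_nhds (Or.inr (by simpa using hb.ne'))
  refine tendsto_nhds_unique (hleft.congr' ?_) ((hpow.const_mul _).add (hs.mul hrest))
  filter_upwards [self_mem_nhdsWithin] with ε hε
  exact one_sub_integral_cexp_of_tail μ hβ hτ hτ0 htail hint (by rw [hre]; exact hε)

end Tail

theorem I_mul_ofReal_cpow {b : ℝ} (hb : 0 < b) (β : ℝ) :
    (Complex.I * b) ^ (β : ℂ)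
      = Complex.exp (Complex.I * (β : ℂ) * (π : ℂ) / 2) * ((b ^ β : ℝ) : ℂ) := by
  have hbI : (b : ℂ) * Complex.I ≠ 0 :=
    mul_ne_zero (Complex.ofReal_ne_zero.2 hb.ne') Complex.I_ne_zero
  rw [mul_comm Complex.I, Complex.cpow_def_of_ne_zero hbI,
    Complex.log_ofReal_mul hb Complex.I_ne_zero, Complex.log_I, Real.rpow_def_of_pos hb,
    Complex.ofReal_exp, ← Complex.exp_add]
  congr 1
  push_cast
  ring

theorem stmt9 {Y : Type*} [MeasurableSpace Y] (μ : Measure Y) [IsProbabilityMeasure μ]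
    (β q c C₀ : ℝ) (hβ : β ∈ Set.Ioo (1/2 : ℝ) 1) (hq : q ∈ Set.Ioc 1 (2*β))
    (hc : 0 < c) (hC₀ : 0 < C₀)
    (τ : Y → ℝ) (hτmeas : Measurable τ) (hτ1 : ∀ᵐ y ∂μ, 1 ≤ τ y)
    (H : ℝ → ℝ)
    (htail : ∀ t : ℝ, 0 < t → (μ {y | t < τ y}).toReal = c * t ^ (-β) + H t)
    (hH : ∀ t : ℝ, 1 ≤ t → |H t| ≤ C₀ * t ^ (-q)) :
    IntegrableOn H (Set.Ioi (0:ℝ)) ∧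
    ∃ C : ℝ, 0 < C ∧ ∀ b ∈ Set.Ioc (0:ℝ) 1,
      ‖1 - (∫ y, Complex.exp (-Complex.I * (b:ℂ) * (τ y : ℂ)) ∂μ)
          - (c:ℂ) * ((Real.Gamma (1-β) : ℂ) * Complex.exp (Complex.I * (β:ℂ) * (π:ℂ) / 2))
              * ((b ^ β : ℝ) : ℂ)
          - Complex.I * ((∫ t in Set.Ioi (0:ℝ), H t : ℝ) : ℂ) * (b:ℂ)‖ ≤ C * b ^ q := by
  obtain ⟨hq1, hq2⟩ := hq
  have hβ1 : β < 1 := hβ.2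
  have hτ0 : ∀ᵐ y ∂μ, 0 ≤ τ y := hτ1.mono fun y hy => zero_le_one.trans hy
  have hT : Antitone fun t => μ.real {y | t < τ y} := fun t u htu =>
    measureReal_mono fun y (hy : u < τ y) => htu.trans_lt hy
  have hint : IntegrableOn H (Ioi 0) := integrableOn_of_tail hβ1 hq1 hT htail hH
  refine ⟨hint, (∫ t in Ioc (0 : ℝ) 1, |H t|) + C₀ * (1 / (2 - q) + 2 / (q - 1)), ?_, ?_⟩
  · have h₁ : 0 < 2 - q := by linarith
    have h₂ : 0 < q - 1 := by linarith
    have h₃ : 0 ≤ ∫ t in Ioc (0 : ℝ) 1, |H t| := integral_nonneg fun t => abs_nonneg _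
    positivity
  intro b hb
  have hb0 : 0 < b := hb.1
  have hintH : IntegrableOn (fun t : ℝ => Complex.exp (-(Complex.I * b) * t) * H t) (Ioi 0) := by
    refine hint.ofReal.bdd_mul (c := 1) (Continuous.aestronglyMeasurable (by fun_prop)) ?_
    filter_upwards [ae_restrict_mem measurableSet_Ioi] with t ht
    exact norm_cexp_neg_mul_le_one (by simp) (le_of_lt ht)
  have hintH' : IntegrableOn (fun t : ℝ => (H t : ℂ)) (Ioi 0) := hint.ofReal
  have hdiff : ∫ t in Ioi (0 : ℝ), (Complex.exp (-(Complex.I * b) * t) - 1) * H t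
      = (∫ t in Ioi (0 : ℝ), Complex.exp (-(Complex.I * b) * t) * H t)
        - ((∫ t in Ioi (0 : ℝ), H t : ℝ) : ℂ) := by
    rw [← integral_complex_ofReal, ← integral_sub hintH hintH']
    simp only [sub_mul, one_mul]
  have hbound := norm_integral_cexp_sub_one_mul_le hq1 (by linarith) hC₀.le hint hH hb
  have hkey := one_sub_integral_cexp_I_of_tail μ hβ1 hτmeas hτ0 htail hint hb0
  rw [I_mul_ofReal_cpow hb0] at hkey
  simp only [neg_mul] at hkey hdiff hbound ⊢
  rw [hkey]
  calc _ = ‖Complex.I * b *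
        ∫ t in Ioi (0 : ℝ), (Complex.exp (-(Complex.I * b * t)) - 1) * H t‖ := by
        rw [hdiff]
        congr 1
        ring
    _ = b * ‖∫ t in Ioi (0 : ℝ), (Complex.exp (-(Complex.I * b * t)) - 1) * H t‖ := by
        rw [norm_mul, norm_mul, Complex.norm_I, one_mul, Complex.norm_real, norm_of_nonneg hb0.le]
    _ ≤ b * _ := mul_le_mul_of_nonneg_left hbound hb0.le
    _ = _ := by
        rw [rpow_sub_one hb0.ne']
        field_simp
end

section
/- Let (X,μ) be a finite measure space, f : X → X measurable, τ₀ : X → ℝ measurable, and let d_* > 0 and q ∈ (0,1). For n ≥ 1 define X_q(n) = { x ∈ X : ⌊τ₀(x)⌋ = n and τ₀(f^j x) ≥ n^{1−q} for some integer j with 1 ≤ j < d_* log n }. Suppose μ(τ₀ > t) ≤ C₁ t^{−β} for all t ≥ 1, where C₁ > 0 and β ∈ (0,1), and suppose there exist C₂ > 0 and p ∈ (0,1) such that μ(X_q(n)) ≤ C₂ n^{−p} μ({x : ⌊τ₀(x)⌋ = n}) for all n ≥ 1. Then Σ_{n≥1} n^{β'} μ(X_q(n)) < ∞ for every β' ∈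 (β, β+p). -/
open MeasureTheory
open scoped ENNReal

/-- The set `X_q(n)` of points whose return time has integer part exactly `n`
and which experience another large return time within time `d_* log n`. -/
def Xq {X : Type*} (f : X → X) (τ₀ : X → ℝ) (dstar q : ℝ) (n : ℕ) : Set X :=
  {x | ⌊τ₀ x⌋ = (n : ℤ) ∧
    ∃ j : ℕ, 1 ≤ j ∧ (j : ℝ) < dstar * Real.log n ∧ (n : ℝ) ^ (1 - q) ≤ τ₀ (f^[j] x)}

/-- For `s ≤ 1`, the power `n ^ s` is dominated by the partial sums of `k ^ (s - 1)`. -/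
lemma rpow_le_sum_range_rpow_sub_one {s : ℝ} (hs : s ≤ 1) {n : ℕ} (hn : 1 ≤ n) :
    (n : ℝ) ^ s ≤ ∑ k ∈ Finset.range n, ((k + 1 : ℕ) : ℝ) ^ (s - 1) := by
  have hn' : (0 : ℝ) < n := by exact_mod_cast hn
  calc (n : ℝ) ^ s = ∑ _k ∈ Finset.range n, (n : ℝ) ^ (s - 1) := by
        rw [Finset.sum_const, Finset.card_range, nsmul_eq_mul, Real.rpow_sub_one hn'.ne']
        field_simp
    _ ≤ _ := by
        refine Finset.sum_le_sum fun k hk => ?_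
        refine Real.rpow_le_rpow_of_nonpos (by positivity) ?_ (by linarith)
        exact_mod_cast Finset.mem_range.mp hk

/-- A polynomial tail bound on large values gives one at all positive integers. -/
lemma measure_natCast_le_le_of_tail {X : Type*} [MeasurableSpace X] (μ : Measure X)
    [IsFiniteMeasure μ] {τ : X → ℝ} {C β : ℝ} (hC : 0 ≤ C)
    (htail : ∀ t : ℝ, 1 ≤ t → μ {x | t < τ x} ≤ ENNReal.ofReal (C * t ^ (-β)))
    {k : ℕ} (hk : 1 ≤ k) :
    μ {x | (k : ℝ) ≤ τ x} ≤
      ENNReal.ofReal ((μ.real Set.univ + C * 2 ^ β) * (k : ℝ) ^ (-β)) := by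
  rcases hk.eq_or_lt with rfl | hk
  · calc μ {x | ((1 : ℕ) : ℝ) ≤ τ x} ≤ μ Set.univ := measure_mono (Set.subset_univ _)
      _ = ENNReal.ofReal (μ.real Set.univ) := (ofReal_measureReal).symm
      _ ≤ _ := by
        refine ENNReal.ofReal_le_ofReal ?_
        have : 0 ≤ C * (2 : ℝ) ^ β := by positivity
        simpa using this
  · have hk' : (2 : ℝ) ≤ k := by exact_mod_cast hk
    calc μ {x | (k : ℝ) ≤ τ x} ≤ μ {x | (k : ℝ) / 2 < τ x} := by
          refine measure_mono fun x (hx : (k : ℝ) ≤ τ x) => ?_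
          change (k : ℝ) / 2 < τ x
          linarith
      _ ≤ ENNReal.ofReal (C * ((k : ℝ) / 2) ^ (-β)) := htail _ (by linarith)
      _ ≤ _ := by
        refine ENNReal.ofReal_le_ofReal ?_
        rw [Real.div_rpow (by positivity) (by norm_num), Real.rpow_neg (by norm_num : (0:ℝ) ≤ 2),
          div_inv_eq_mul, add_mul]
        have : 0 ≤ μ.real Set.univ * (k : ℝ) ^ (-β) := by positivity
        linarith

/-- A tail bound of order `β` gives finite moments of every order `s < β`, in series form. -/
lemma tsum_rpow_mul_measure_floor_lt_top {X : Type*} [MeasurableSpace X] (μ : Measure X)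
    [IsFiniteMeasure μ] {τ : X → ℝ} (hτ : Measurable τ) {C β s : ℝ} (hC : 0 ≤ C)
    (htail : ∀ t : ℝ, 1 ≤ t → μ {x | t < τ x} ≤ ENNReal.ofReal (C * t ^ (-β)))
    (hs : s ≤ 1) (hsβ : s < β) :
    (∑' n : ℕ, ENNReal.ofReal (((n + 1 : ℕ) : ℝ) ^ s) * μ {x | ⌊τ x⌋ = ((n + 1 : ℕ) : ℤ)})
      < ⊤ := by
  set A : ℕ → Set X := fun n => {x | ⌊τ x⌋ = ((n + 1 : ℕ) : ℤ)} with hA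
  have hAm : ∀ n, MeasurableSet (A n) := fun n =>
    (Int.measurable_floor.comp hτ) (measurableSet_singleton _)
  have hAd : Pairwise (Function.onFun Disjoint A) := by
    intro m n hmn
    refine Set.disjoint_left.mpr fun x hm hn => hmn ?_
    have : ((m + 1 : ℕ) : ℤ) = ((n + 1 : ℕ) : ℤ) := Eq.trans (Eq.symm hm) hn
    omega
  set w : ℕ → ℝ≥0∞ := fun k => ENNReal.ofReal (((k + 1 : ℕ) : ℝ) ^ (s - 1)) with hw
  have hterm : ∀ n, ENNReal.ofReal (((n + 1 : ℕ) : ℝ) ^ s) * μ (A n) ≤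
      ∑' k, w k * (if k ≤ n then μ (A n) else 0) := by
    intro n
    calc ENNReal.ofReal (((n + 1 : ℕ) : ℝ) ^ s) * μ (A n)
        ≤ (∑ k ∈ Finset.range (n + 1), w k) * μ (A n) := by
          gcongr
          rw [← ENNReal.ofReal_sum_of_nonneg fun k _ => by positivity]
          exact ENNReal.ofReal_le_ofReal (rpow_le_sum_range_rpow_sub_one hs (by omega))
      _ = ∑ k ∈ Finset.range (n + 1), w k * (if k ≤ n then μ (A n) else 0) := by
          rw [Finset.sum_mul]
          refine Finset.sum_congr rfl fun k hk => ?_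
          rw [if_pos (Nat.lt_succ_iff.mp (Finset.mem_range.mp hk))]
      _ ≤ _ := ENNReal.sum_le_tsum _
  have htailsum : ∀ k, ∑' n, (if k ≤ n then μ (A n) else 0) ≤
      μ {x | ((k + 1 : ℕ) : ℝ) ≤ τ x} := by
    intro k
    have hite : ∀ n, (if k ≤ n then μ (A n) else 0) = μ (A n ∩ {_x | k ≤ n}) := by
      intro n
      by_cases h : k ≤ n <;> simp [h]
    simp_rw [hite]
    rw [← measure_iUnion
      (fun m n hmn => (hAd hmn).mono Set.inter_subset_left Set.inter_subset_left)
      (fun n => (hAm n).inter (MeasurableSet.const _))]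
    refine measure_mono (Set.iUnion_subset fun n x hx => ?_)
    obtain ⟨hx, hkn⟩ := hx
    have hx' : ⌊τ x⌋ = ((n + 1 : ℕ) : ℤ) := hx
    have hkn' : k ≤ n := hkn
    have : ((k + 1 : ℕ) : ℤ) ≤ ⌊τ x⌋ := by omega
    exact_mod_cast Int.le_floor.mp this
  set D : ℝ := μ.real Set.univ + C * 2 ^ β with hD
  have hsum : Summable fun k : ℕ => D * ((k + 1 : ℕ) : ℝ) ^ (s - 1 - β) :=
    ((summable_nat_add_iff 1).mpr (Real.summable_nat_rpow.mpr (by linarith))).mul_left D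
  calc ∑' n, ENNReal.ofReal (((n + 1 : ℕ) : ℝ) ^ s) * μ (A n)
      ≤ ∑' n, ∑' k, w k * (if k ≤ n then μ (A n) else 0) := ENNReal.tsum_le_tsum hterm
    _ = ∑' k, w k * ∑' n, (if k ≤ n then μ (A n) else 0) := by
        rw [ENNReal.tsum_comm]
        simp_rw [ENNReal.tsum_mul_left]
    _ ≤ ∑' k : ℕ, ENNReal.ofReal (D * ((k + 1 : ℕ) : ℝ) ^ (s - 1 - β)) := by
        refine ENNReal.tsum_le_tsum fun k => ?_
        calc w k * ∑' n, (if k ≤ n then μ (A n) else 0)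
            ≤ w k * ENNReal.ofReal (D * ((k + 1 : ℕ) : ℝ) ^ (-β)) := by
              gcongr
              exact (htailsum k).trans (measure_natCast_le_le_of_tail μ hC htail (by omega))
          _ = _ := by
              rw [hw, ← ENNReal.ofReal_mul (by positivity), sub_eq_add_neg (s - 1) β,
                Real.rpow_add (by positivity)]
              ring_nf
    _ < ⊤ := hsum.tsum_ofReal_lt_top

theorem stmt18 {X : Type*} [MeasurableSpace X] (μ : Measure X) [IsFiniteMeasure μ]
    (f : X → X) (hf : Measurable f) (τ₀ : X → ℝ) (hτ₀ : Measurable τ₀)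
    (dstar q : ℝ) (hdstar : 0 < dstar) (hq : q ∈ Set.Ioo (0:ℝ) 1)
    (C₁ β : ℝ) (hC₁ : 0 < C₁) (hβ : β ∈ Set.Ioo (0:ℝ) 1)
    (htail : ∀ t : ℝ, 1 ≤ t → μ {x | t < τ₀ x} ≤ ENNReal.ofReal (C₁ * t ^ (-β)))
    (C₂ p : ℝ) (hC₂ : 0 < C₂) (hp : p ∈ Set.Ioo (0:ℝ) 1)
    (hXq : ∀ n : ℕ, 1 ≤ n →
      μ (Xq f τ₀ dstar q n) ≤
        ENNReal.ofReal (C₂ * (n : ℝ) ^ (-p)) * μ {x | ⌊τ₀ x⌋ = (n : ℤ)}) :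
    ∀ β' ∈ Set.Ioo β (β + p),
      (∑' n : ℕ, ENNReal.ofReal ((n : ℝ) ^ β') * μ (Xq f τ₀ dstar q n)) < ⊤ := by
  rintro β' ⟨hβ', hβ'p⟩
  have hβ'0 : 0 < β' := hβ.1.trans hβ'
  rw [tsum_eq_zero_add' ENNReal.summable, Nat.cast_zero, Real.zero_rpow hβ'0.ne',
    ENNReal.ofReal_zero, zero_mul, zero_add]
  have hfin := tsum_rpow_mul_measure_floor_lt_top μ hτ₀ (s := β' - p) hC₁.le htail
    (by linarith [hβ.2]) (by linarith)
  refine lt_of_le_of_lt ?_ (ENNReal.mul_lt_top (ENNReal.ofReal_lt_top (r := C₂)) hfin)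
  rw [← ENNReal.tsum_mul_left]
  refine ENNReal.tsum_le_tsum fun n => ?_
  calc ENNReal.ofReal (((n + 1 : ℕ) : ℝ) ^ β') * μ (Xq f τ₀ dstar q (n + 1))
      ≤ ENNReal.ofReal (((n + 1 : ℕ) : ℝ) ^ β') *
          (ENNReal.ofReal (C₂ * ((n + 1 : ℕ) : ℝ) ^ (-p)) *
            μ {x | ⌊τ₀ x⌋ = ((n + 1 : ℕ) : ℤ)}) := by
        gcongr
        exact hXq (n + 1) (by omega)
    _ = _ := by
        rw [← mul_assoc, ← mul_assoc, ← ENNReal.ofReal_mul (by positivity),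
          ← ENNReal.ofReal_mul hC₂.le, sub_eq_add_neg, Real.rpow_add (by positivity)]
        ring_nf
end
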